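/- Let Ω be a finite scenario set with probability weights p : Ω → ℝ satisfying p_ω ≥ 0 and Σ_ω p_ω = 1, let L : Ω → ℝ, and let α ∈ [0,1). Then the infimum of F_α over ℝ is attained: there exists θ* ∈ ℝ such that F_α(θ*) ≤ F_α(θ) for all θ ∈ ℝ; in particular CVaR_α(L) = inf_θ F_α(θ) is a (finite) minimum. -/

import Mathlib

/-!
`F_α` is continuous. To the left of all losses it is affine with slope `1 - (1 - α)⁻¹ ∑ p ≤ 0`, and
to the right of all losses it is the identity, so it is minimized over `ℝ` by its minimizer on a
compact interval containing all losses.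
-/

theorem exists_forall_le_of_antitoneOn_Iic_of_monotoneOn_Ici {X Y : Type*}
    [LinearOrder X] [TopologicalSpace X] [CompactIccSpace X]
    [LinearOrder Y] [TopologicalSpace Y] [ClosedIicTopology Y] {f : X → Y} {a b : X}
    (hf : ContinuousOn f (Set.uIcc a b)) (ha : AntitoneOn f (Set.Iic a))
    (hb : MonotoneOn f (Set.Ici b)) : ∃ x, ∀ y, f x ≤ f y := by
  obtain ⟨x, -, hx⟩ := isCompact_uIcc.exists_isMinOn Set.nonempty_uIcc hf
  refine ⟨x, fun y => ?_⟩
  rcases le_total y (a ⊓ b) with hy | hy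
  · calc
      f x ≤ f (a ⊓ b) := hx ⟨le_rfl, inf_le_sup⟩
      _ ≤ f y := ha (hy.trans inf_le_left) inf_le_left hy
  rcases le_total (a ⊔ b) y with hy' | hy'
  · calc
      f x ≤ f (a ⊔ b) := hx ⟨inf_le_sup, le_rfl⟩
      _ ≤ f y := hb le_sup_right (le_sup_right.trans hy') hy'
  · exact hx ⟨hy, hy'⟩

section RockafellarUryasev

variable {ι : Type*} [Fintype ι]

/-- The Rockafellar–Uryasev function `F_α` of the losses `L` with arbitrary real weights `p`; for
probability weights and `0 ≤ α < 1`, its infimum over `θ` is the conditional value-at-risk. -/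
noncomputable def rockafellarUryasev (p L : ι → ℝ) (α θ : ℝ) : ℝ :=
  θ + (1 - α)⁻¹ * ∑ i, p i * max (L i - θ) 0

theorem continuous_rockafellarUryasev (p L : ι → ℝ) (α : ℝ) :
    Continuous (rockafellarUryasev p L α) := by
  unfold rockafellarUryasev
  fun_prop

theorem rockafellarUryasev_of_mem_lowerBounds (p : ι → ℝ) {L : ι → ℝ} (α : ℝ) {θ : ℝ}
    (hθ : θ ∈ lowerBounds (Set.range L)) :
    rockafellarUryasev p L α θ =
      (1 - (1 - α)⁻¹ * ∑ i, p i) * θ + (1 - α)⁻¹ * ∑ i, p i * L i := by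
  have hsum : ∑ i, p i * max (L i - θ) 0 = ∑ i, p i * L i - (∑ i, p i) * θ := by
    rw [Finset.sum_mul, ← Finset.sum_sub_distrib]
    refine Finset.sum_congr rfl fun i _ => ?_
    rw [max_eq_left (sub_nonneg.2 (hθ ⟨i, rfl⟩)), mul_sub]
  rw [rockafellarUryasev, hsum]
  ring

theorem rockafellarUryasev_of_mem_upperBounds (p : ι → ℝ) {L : ι → ℝ} (α : ℝ) {θ : ℝ}
    (hθ : θ ∈ upperBounds (Set.range L)) : rockafellarUryasev p L α θ = θ := by
  have hmax (i : ι) : max (L i - θ) 0 = 0 := max_eq_right (sub_nonpos.2 (hθ ⟨i, rfl⟩))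
  simp [rockafellarUryasev, hmax]

theorem antitoneOn_rockafellarUryasev_lowerBounds {p : ι → ℝ} (L : ι → ℝ) {α : ℝ}
    (hp : 1 ≤ (1 - α)⁻¹ * ∑ i, p i) :
    AntitoneOn (rockafellarUryasev p L α) (lowerBounds (Set.range L)) := by
  intro θ₁ h₁ θ₂ h₂ hle
  rw [rockafellarUryasev_of_mem_lowerBounds p α h₁, rockafellarUryasev_of_mem_lowerBounds p α h₂]
  gcongr ?_ + _
  exact mul_le_mul_of_nonpos_left hle (sub_nonpos.2 hp)

theorem monotoneOn_rockafellarUryasev_upperBounds (p L : ι → ℝ) (α : ℝ) :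
    MonotoneOn (rockafellarUryasev p L α) (upperBounds (Set.range L)) := by
  intro θ₁ h₁ θ₂ h₂ hle
  rwa [rockafellarUryasev_of_mem_upperBounds p α h₁, rockafellarUryasev_of_mem_upperBounds p α h₂]

theorem rockafellar_uryasev_inf_attained_general (p L : ι → ℝ) (α : ℝ)
    (hp : 1 ≤ (1 - α)⁻¹ * ∑ i, p i) :
    ∃ θstar : ℝ,
      (∀ θ : ℝ, rockafellarUryasev p L α θstar ≤ rockafellarUryasev p L α θ) ∧
      sInf (Set.range (rockafellarUryasev p L α)) = rockafellarUryasev p L α θstar := by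
  obtain ⟨a, ha⟩ := (Set.finite_range L).bddBelow
  obtain ⟨b, hb⟩ := (Set.finite_range L).bddAbove
  have hanti : AntitoneOn (rockafellarUryasev p L α) (Set.Iic a) :=
    (antitoneOn_rockafellarUryasev_lowerBounds L hp).mono fun _ hθ => lowerBounds_mono_mem hθ ha
  have hmono : MonotoneOn (rockafellarUryasev p L α) (Set.Ici b) :=
    (monotoneOn_rockafellarUryasev_upperBounds p L α).mono fun _ hθ => upperBounds_mono_mem hθ hb
  obtain ⟨θstar, hmin⟩ := exists_forall_le_of_antitoneOn_Iic_of_monotoneOn_Ici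
    (continuous_rockafellarUryasev p L α).continuousOn hanti hmono
  exact ⟨θstar, hmin, IsLeast.csInf_eq ⟨⟨θstar, rfl⟩, Set.forall_mem_range.2 hmin⟩⟩

end RockafellarUryasev

/-- The infimum of the Rockafellar–Uryasev function `F_α` over `ℝ`
is attained, so `CVaR_α(L) = inf_θ F_α(θ)` is a (finite) minimum. -/
theorem rockafellar_uryasev_inf_attained
    (N : ℕ) (p : Fin N → ℝ) (L : Fin N → ℝ) (α : ℝ)
    (hp : ∀ ω, 0 ≤ p ω) (hpsum : ∑ ω, p ω = 1)
    (hα : 0 ≤ α ∧ α < 1) :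
    ∃ θstar : ℝ,
      (∀ θ : ℝ,
        (θstar + (1 - α)⁻¹ * ∑ ω, p ω * max (L ω - θstar) 0) ≤
          (θ + (1 - α)⁻¹ * ∑ ω, p ω * max (L ω - θ) 0)) ∧
      sInf (Set.range fun θ : ℝ => θ + (1 - α)⁻¹ * ∑ ω, p ω * max (L ω - θ) 0) =
        θstar + (1 - α)⁻¹ * ∑ ω, p ω * max (L ω - θstar) 0 := by
  have hslope : 1 ≤ (1 - α)⁻¹ * ∑ ω, p ω := by
    rw [hpsum, mul_one]
    exact (one_le_inv₀ (sub_pos.2 hα.2)).2 (sub_le_self 1 hα.1)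
  exact rockafellar_uryasev_inf_attained_general p L α hslope
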